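/- arXiv:1502.06144 — 3 statements merged into one kernel-verified Lean document; each statement's English description precedes it below -/
import Mathlib

section
/- Fix k ≥ 1 and 0 < Δ < Δ_k, and for each n ≥ k let m = ⌈Δ n⌉ and let V = (V_1,…,V_m) be m i.i.d. uniform k-flats of F_2^n. Then P_unif(V is flat-satisfiable) → 1 as n → ∞. -/
open scoped BigOperators Classical
open Filter Topology

abbrev F2n (n : ℕ) := Fin n → ZMod 2

def IsFlat (n k : ℕ) (W : Set (F2n n)) : Prop :=
  ∃ A : AffineSubspace (ZMod 2) (F2n n),
    (A : Set (F2n n)) = W ∧ W.Nonempty ∧ Module.finrank (ZMod 2) A.direction = n - k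

def Flat (n k : ℕ) : Type := {W : Set (F2n n) // IsFlat n k W}

noncomputable instance (n k : ℕ) : Fintype (Flat n k) := by
  unfold Flat; exact Fintype.ofFinite _

noncomputable def q0 (n k : ℕ) : Flat n k → ℝ :=
  fun _ => (Fintype.card (Flat n k) : ℝ)⁻¹

noncomputable def qx (n k : ℕ) (x : F2n n) : Flat n k → ℝ :=
  fun W => if x ∈ W.1 then 0 else (Nat.card {W : Flat n k // x ∉ W.1} : ℝ)⁻¹

noncomputable def prob {α : Type*} [Fintype α] (p : α → ℝ) (E : Set α) : ℝ :=
  ∑ a, if a ∈ E then p a else 0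

noncomputable def expect {α : Type*} [Fintype α] (p : α → ℝ) (f : α → ℝ) : ℝ :=
  ∑ a, p a * f a

noncomputable def Punif (n k m : ℕ) : (Fin m → Flat n k) → ℝ :=
  fun V => ∏ j, q0 n k (V j)

noncomputable def Pplanted (n k m : ℕ) : (Fin m → Flat n k) → ℝ :=
  fun V => ((2:ℝ)^n)⁻¹ * ∑ x : F2n n, ∏ j, qx n k x (V j)

noncomputable def Z (n k m : ℕ) (V : Fin m → Flat n k) : ℕ :=
  Nat.card {x : F2n n // ∀ j, x ∉ (V j).1}

noncomputable def satCount (n k m : ℕ) (V : Fin m → Flat n k) (x : F2n n) : ℕ :=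
  Nat.card {j : Fin m // x ∉ (V j).1}

noncomputable def maxSat (n k m : ℕ) (V : Fin m → Flat n k) : ℕ :=
  Finset.univ.sup (fun x : F2n n => satCount n k m V x)

noncomputable def qxpi (n k : ℕ) (x : F2n n) (π : ℝ) : Flat n k → ℝ :=
  fun W => (1 - π) * q0 n k W + π * qx n k x W

noncomputable def Pplantedpi (n k m : ℕ) (π : ℝ) : (Fin m → Flat n k) → ℝ :=
  fun V => ((2:ℝ)^n)⁻¹ * ∑ x : F2n n, ∏ j, qxpi n k x π (V j)

noncomputable def DeltaK (k : ℕ) : ℝ :=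
  Real.log (1/2) / Real.log (1 - ((2:ℝ)^k)⁻¹)

/-- Image of a flat under an affine automorphism. -/
noncomputable def flatMap {n k : ℕ} (e : F2n n ≃ᵃ[ZMod 2] F2n n) (W : Flat n k) : Flat n k :=
  ⟨Set.image e W.1, by
    obtain ⟨W, A, hA, hne, hd⟩ := W
    refine ⟨A.map e.toAffineMap, ?_, hne.image _, ?_⟩
    · subst hA; rfl
    · rw [AffineSubspace.map_direction, ← hd]
      exact LinearEquiv.finrank_map_eq e.linear A.direction⟩

lemma flatMap_bij {n k : ℕ} (e : F2n n ≃ᵃ[ZMod 2] F2n n) :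
    Function.Bijective (flatMap (k := k) e) := by
  have : Function.Injective (flatMap (k := k) e) := by
    intro W U h
    apply Subtype.ext
    have hi : Set.image e W.1 = Set.image e U.1 := congrArg Subtype.val h
    exact e.injective.image_injective hi
  exact Finite.injective_iff_bijective.mp this

noncomputable def ind {n k : ℕ} (x : F2n n) (W : Flat n k) : ℝ := if x ∈ W.1 then 1 else 0

lemma ind_map {n k : ℕ} (e : F2n n ≃ᵃ[ZMod 2] F2n n) (x : F2n n) (W : Flat n k) :
    ind (e x) (flatMap e W) = ind x W := by
  have : e x ∈ (flatMap e W).1 ↔ x ∈ W.1 := e.injective.mem_set_image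
  simp only [ind, this]

noncomputable def S2 (n k : ℕ) (x y : F2n n) : ℝ := ∑ W : Flat n k, ind x W * ind y W

lemma S2_map {n k : ℕ} (e : F2n n ≃ᵃ[ZMod 2] F2n n) (x y : F2n n) :
    S2 n k (e x) (e y) = S2 n k x y := by
  unfold S2
  symm
  apply Fintype.sum_bijective (flatMap e) (flatMap_bij e)
  intro W
  rw [ind_map, ind_map]

lemma exists_lin {n : ℕ} (v w : F2n n) (hv : v ≠ 0) (hw : w ≠ 0) :
    ∃ g : F2n n ≃ₗ[ZMod 2] F2n n, g v = w := by
  let f := (LinearEquiv.toSpanNonzeroSingleton (ZMod 2) _ v hv).symm ≪≫ₗ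
    LinearEquiv.toSpanNonzeroSingleton (ZMod 2) _ w hw
  obtain ⟨g, hg⟩ := Submodule.exists_linearEquiv_restrict_eq f
  refine ⟨g, ?_⟩
  have h := hg ⟨v, Submodule.mem_span_singleton_self v⟩
  rw [← h]
  have h1 : (LinearEquiv.toSpanNonzeroSingleton (ZMod 2) _ v hv).symm
      ⟨v, Submodule.mem_span_singleton_self v⟩ = 1 := by
    rw [LinearEquiv.symm_apply_eq, LinearEquiv.toSpanNonzeroSingleton_one]
  simp only [f, LinearEquiv.trans_apply, h1, LinearEquiv.toSpanNonzeroSingleton_one]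

lemma exists_aff {n : ℕ} (x y x' y' : F2n n) (h : (x = y ∧ x' = y') ∨ (x ≠ y ∧ x' ≠ y')) :
    ∃ e : F2n n ≃ᵃ[ZMod 2] F2n n, e x = x' ∧ e y = y' := by
  obtain ⟨g, hg⟩ : ∃ g : F2n n ≃ₗ[ZMod 2] F2n n, g (y - x) = y' - x' := by
    rcases h with ⟨rfl, rfl⟩ | ⟨h1, h2⟩
    · exact ⟨LinearEquiv.refl _ _, by simp⟩
    · exact exists_lin _ _ (sub_ne_zero.mpr h1.symm) (sub_ne_zero.mpr h2.symm)
  refine ⟨g.toAffineEquiv.trans (AffineEquiv.constVAdd (ZMod 2) _ (x' - g x)), ?_, ?_⟩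
  · simp
  · rw [map_sub] at hg
    simp only [AffineEquiv.trans_apply, LinearEquiv.coe_toAffineEquiv,
      AffineEquiv.constVAdd_apply, vadd_eq_add]
    rw [sub_add_eq_add_sub, add_sub_assoc, hg]; abel

lemma sum_ind {n k : ℕ} (W : Flat n k) : ∑ x, ind x W = (2:ℝ)^(n-k) := by
  obtain ⟨W, A, hA, ⟨p, hp⟩, hd⟩ := W
  have h1 : Nat.card W = 2^(n-k) := by
    have hpA : p ∈ A := by rw [← hA] at hp; exact hp
    have : Nonempty A := ⟨⟨p, hpA⟩⟩
    have e : A.direction ≃ A := Equiv.vaddConst (⟨p, hpA⟩ : A)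
    have h2 : Nat.card A.direction = 2^(n-k) := by
      rw [Module.natCard_eq_pow_finrank (K := ZMod 2), hd]; simp
    rw [← h2, Nat.card_congr e, ← hA]; rfl
  simp only [ind]
  rw [Finset.sum_boole]
  have : (Finset.univ.filter (fun x => x ∈ W)).card = Nat.card W := by
    rw [Nat.card_eq_fintype_card, Fintype.card_subtype]
  rw [this, h1]; simp

lemma flat_nonempty {n k : ℕ} : 0 < Fintype.card (Flat n k) := by
  rw [Fintype.card_pos_iff]
  have hle : n - k ≤ Module.finrank (ZMod 2) (F2n n) := by simp
  obtain ⟨f, hf⟩ := exists_linearIndependent_of_le_finrank hle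
  refine ⟨⟨_, (Submodule.span (ZMod 2) (Set.range f)).toAffineSubspace, rfl, ⟨0, ?_⟩, ?_⟩⟩
  · exact Submodule.zero_mem _
  · rw [Submodule.toAffineSubspace_direction, finrank_span_eq_card hf]; simp

lemma counts {n k : ℕ} (hnk : k ≤ n) (x y : F2n n) :
    S2 n k x x = Fintype.card (Flat n k) * ((2:ℝ)^k)⁻¹ ∧
    (x ≠ y → S2 n k x y ≤ Fintype.card (Flat n k) * ((2:ℝ)^k)⁻¹^2) := by
  set N : ℝ := (Fintype.card (Flat n k) : ℝ)
  set p : ℝ := ((2:ℝ)^k)⁻¹ with hp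
  set M : ℝ := (2:ℝ)^n with hM
  have hMpos : 0 < M := by positivity
  have hppos : 0 < p := by positivity
  have hN : 0 ≤ N := Nat.cast_nonneg _
  have hp1 : p ≤ 1 := inv_le_one_of_one_le₀ (one_le_pow₀ (by norm_num))
  have hL : (2:ℝ)^(n-k) = M * p := by
    rw [hp, hM, pow_sub₀ _ (by norm_num) hnk]
  have hcard : (Fintype.card (F2n n) : ℝ) = M := by simp [hM]
  have hdiag : ∑ z : F2n n, S2 n k z z = N * (M * p) := by
    unfold S2
    rw [Finset.sum_comm]
    have : ∀ W : Flat n k, ∑ z, ind z W * ind z W = M * p := by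
      intro W
      rw [← hL, ← sum_ind W]
      apply Finset.sum_congr rfl
      intro z _; unfold ind; split_ifs <;> simp
    simp [this, N]
  have hconst : ∀ z, S2 n k z z = S2 n k x x := by
    intro z
    obtain ⟨e, h1, h2⟩ := exists_aff x x z z (Or.inl ⟨rfl, rfl⟩)
    conv_lhs => rw [← h1]
    exact S2_map e x x
  have hc1 : S2 n k x x = N * p := by
    simp only [hconst, Finset.sum_const, Finset.card_univ, nsmul_eq_mul] at hdiag
    rw [hcard] at hdiag
    have : M * (S2 n k x x) = M * (N * p) := by rw [hdiag]; ring
    exact mul_left_cancel₀ hMpos.ne' this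
  refine ⟨hc1, fun hxy => ?_⟩
  have hall : ∑ z : F2n n, ∑ w : F2n n, S2 n k z w = N * (M * p)^2 := by
    have : ∀ z w : F2n n, S2 n k z w = ∑ W : Flat n k, ind z W * ind w W := fun _ _ => rfl
    have h2 : ∀ W : Flat n k, ∑ z, ∑ w, ind z W * ind w W = (M * p)^2 := by
      intro W
      rw [← hL, ← sum_ind W, sq, Finset.sum_mul_sum]
    simp_rw [this]
    calc _ = ∑ z : F2n n, ∑ W : Flat n k, ∑ w, ind z W * ind w W :=
          Finset.sum_congr rfl fun z _ => Finset.sum_comm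
      _ = ∑ W : Flat n k, ∑ z, ∑ w, ind z W * ind w W := Finset.sum_comm
      _ = _ := by simp [h2, N]
  have hoff : ∀ z w, S2 n k z w = S2 n k x y + if z = w then N * p - S2 n k x y else 0 := by
    intro z w
    split_ifs with h
    · subst h; rw [hconst, hc1]; ring
    · obtain ⟨e, h1, h2⟩ := exists_aff x y z w (Or.inr ⟨hxy, h⟩)
      conv_lhs => rw [← h1, ← h2]
      rw [S2_map]; ring
  set c := S2 n k x y
  have hsum : M * (M * c + (N * p - c)) = N * (M*p)^2 := by
    rw [← hall]
    simp only [hoff, Finset.sum_add_distrib, Finset.sum_const, Finset.card_univ, nsmul_eq_mul,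
      Finset.sum_ite_eq, Finset.mem_univ, if_true, hcard]
    ring
  have hsum2 : M * c + (N * p - c) = N * (M * p^2) := by
    apply mul_left_cancel₀ hMpos.ne'
    rw [hsum]; ring
  have hM1 : 1 < M := by
    rw [← hcard]
    exact_mod_cast Fintype.one_lt_card_iff.mpr ⟨x, y, hxy⟩
  have : (M - 1) * c ≤ (M - 1) * (N * p^2) := by
    have : 0 ≤ N * p * (1 - p) := by
      apply mul_nonneg (by positivity); linarith
    nlinarith
  exact le_of_mul_le_mul_left this (by linarith)

/-- Second moment bound. -/
lemma second_moment {F X : Type*} [Fintype F] [Fintype X] (m : ℕ) (g : X → F → ℝ)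
    (r : ℝ) (hr : 0 < r) [Nonempty X]
    (h1 : ∀ x, ∑ W, g x W = Fintype.card F * r)
    (hg : ∀ x W, g x W * g x W = g x W)
    (hg0 : ∀ x W, 0 ≤ g x W)
    (h2 : ∀ x y, x ≠ y → ∑ W, g x W * g y W ≤ Fintype.card F * r^2) :
    ((Finset.univ.filter (fun V : Fin m → F => ∑ x, ∏ j, g x (V j) = 0)).card : ℝ)
      * (Fintype.card X * r^m) ≤ (Fintype.card F : ℝ)^m := by
  set N : ℝ := (Fintype.card F : ℝ)
  set M : ℝ := (Fintype.card X : ℝ)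
  have hM : 0 < M := by simp only [M]; exact_mod_cast Fintype.card_pos
  have hN : 0 ≤ N := Nat.cast_nonneg _
  set μ := M * r^m
  have hμ : 0 < μ := by positivity
  let z : (Fin m → F) → ℝ := fun V => ∑ x, ∏ j, g x (V j)
  have e1 : ∑ V, z V = N^m * μ := by
    simp only [z]
    rw [Finset.sum_comm]
    have : ∀ x, ∑ V : Fin m → F, ∏ j, g x (V j) = (N * r)^m := by
      intro x
      rw [← h1 x, Finset.sum_pow']
      simp
    simp only [this, Finset.sum_const, Finset.card_univ, nsmul_eq_mul]
    rw [mul_pow]; ring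
  have e2 : ∑ V, (z V)^2 ≤ N^m * (μ + μ^2) := by
    have h : ∀ x y, ∑ V : Fin m → F, (∏ j, g x (V j)) * (∏ j, g y (V j))
        ≤ (N * r^2)^m + if x = y then (N*r)^m else 0 := by
      intro x y
      have h3 : ∑ V : Fin m → F, (∏ j, g x (V j)) * (∏ j, g y (V j))
          = (∑ W, g x W * g y W)^m := by
        rw [Finset.sum_pow']
        simp [Finset.prod_mul_distrib]
      rw [h3]
      split_ifs with hxy
      · subst hxy
        simp only [hg, h1]
        have : 0 ≤ (N * r^2)^m := by positivity
        linarith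
      · rw [add_zero]
        exact pow_le_pow_left₀ (Finset.sum_nonneg fun W _ => mul_nonneg (hg0 _ _) (hg0 _ _))
          (h2 x y hxy) m
    calc ∑ V, (z V)^2 = ∑ x, ∑ y, ∑ V : Fin m → F, (∏ j, g x (V j)) * (∏ j, g y (V j)) := by
          simp only [z, sq, Finset.sum_mul_sum]
          rw [Finset.sum_comm]
          exact Finset.sum_congr rfl fun x _ => Finset.sum_comm
      _ ≤ ∑ x : X, ∑ y : X, ((N * r^2)^m + if x = y then (N*r)^m else 0) :=
          Finset.sum_le_sum fun x _ => Finset.sum_le_sum fun y _ => h x y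
      _ = N^m * (μ + μ^2) := by
          simp only [Finset.sum_add_distrib, Finset.sum_const, Finset.card_univ, nsmul_eq_mul,
            Finset.sum_ite_eq, Finset.mem_univ, if_true, μ]
          rw [mul_pow, mul_pow]; ring
  have e3 : ∑ V, (z V - μ)^2 ≤ N^m * μ := by
    have : ∑ V, (z V - μ)^2 = ∑ V, (z V)^2 - 2 * μ * ∑ V, z V + N^m * μ^2 := by
      have hc : ∑ _V : Fin m → F, μ^2 = N^m * μ^2 := by simp [N]
      rw [← hc, Finset.mul_sum, ← Finset.sum_sub_distrib, ← Finset.sum_add_distrib]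
      exact Finset.sum_congr rfl fun V _ => by ring
    rw [this, e1]; nlinarith
  have e4 : ((Finset.univ.filter (fun V : Fin m → F => z V = 0)).card : ℝ) * μ^2
      ≤ ∑ V, (z V - μ)^2 := by
    calc _ = ∑ V ∈ Finset.univ.filter (fun V : Fin m → F => z V = 0), (z V - μ)^2 := by
          rw [← nsmul_eq_mul, ← Finset.sum_const]
          refine Finset.sum_congr rfl fun V hV => ?_
          rw [(Finset.mem_filter.mp hV).2]; ring
      _ ≤ _ := Finset.sum_le_sum_of_subset_of_nonneg (Finset.filter_subset _ _)
          fun V _ _ => sq_nonneg _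
  have e5 := e4.trans e3
  apply le_of_mul_le_mul_right _ hμ
  calc _ = ((Finset.univ.filter (fun V : Fin m → F => z V = 0)).card : ℝ) * μ^2 := by
        simp only [z]; ring
    _ ≤ _ := e5

lemma prob_bound {n k m : ℕ} (hk : 1 ≤ k) (hnk : k ≤ n) :
    1 - ((2:ℝ)^n * (1 - ((2:ℝ)^k)⁻¹)^m)⁻¹ ≤ prob (Punif n k m) {V | 0 < Z n k m V} ∧
    prob (Punif n k m) {V | 0 < Z n k m V} ≤ 1 := by
  set N : ℝ := (Fintype.card (Flat n k) : ℝ) with hN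
  have hNpos : 0 < N := by simp only [N]; exact_mod_cast flat_nonempty
  set p : ℝ := ((2:ℝ)^k)⁻¹ with hp
  have hp1 : p < 1 := inv_lt_one_of_one_lt₀ (one_lt_pow₀ (by norm_num) (by omega))
  have hP : ∀ V, Punif n k m V = (N^m)⁻¹ := by
    intro V; simp [Punif, q0, N]
  let z : (Fin m → Flat n k) → ℝ := fun V => ∑ x, ∏ j, (1 - ind x (V j))
  have hz : ∀ V, z V = Z n k m V := by
    intro V
    have : ∀ x : F2n n, ∏ j, (1 - ind x (V j)) = if ∀ j, x ∉ (V j).1 then (1:ℝ) else 0 := by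
      intro x
      split_ifs with h
      · apply Finset.prod_eq_one
        intro j _; simp [ind, h j]
      · push Not at h
        obtain ⟨j, hj⟩ := h
        apply Finset.prod_eq_zero (Finset.mem_univ j)
        simp [ind, hj]
    simp only [z, this, Finset.sum_boole, Z]
    rw [Nat.card_eq_fintype_card, Fintype.card_subtype]
  have hcard : (Fintype.card (F2n n) : ℝ) = 2^n := by simp
  have hS1 : ∀ x : F2n n, ∑ W : Flat n k, ind x W = N * p := by
    intro x
    rw [← (counts hnk x x).1]
    unfold S2
    refine Finset.sum_congr rfl fun W _ => ?_
    unfold ind; split_ifs <;> simp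
  have key := second_moment (F := Flat n k) (X := F2n n) m (fun x W => 1 - ind x W) (1 - p)
    (by linarith)
    (by
      intro x
      rw [Finset.sum_sub_distrib, hS1]
      simp [N]; ring)
    (by intro x W; unfold ind; split_ifs <;> simp)
    (by intro x W; unfold ind; split_ifs <;> simp)
    (by
      intro x y hxy
      have h := (counts hnk x y).2 hxy
      have : ∑ W : Flat n k, (1 - ind x W) * (1 - ind y W) = N - N * p - N * p + S2 n k x y := by
        have h0 : N = ∑ W : Flat n k, (1:ℝ) := by simp [N]
        have h3 := hS1 x
        have h4 := hS1 y
        calc _ = ∑ W : Flat n k, (1:ℝ) - ∑ W : Flat n k, ind x W - ∑ W : Flat n k, ind y W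
              + S2 n k x y := by
              unfold S2
              rw [← Finset.sum_sub_distrib, ← Finset.sum_sub_distrib, ← Finset.sum_add_distrib]
              exact Finset.sum_congr rfl fun W _ => by ring
          _ = _ := by rw [h3, h4, ← h0]
      rw [this]
      nlinarith)
  rw [hcard] at key
  set C : ℝ := ((Finset.univ.filter (fun V : Fin m → Flat n k => z V = 0)).card : ℝ) with hC
  have hprob : prob (Punif n k m) {V | 0 < Z n k m V} = 1 - C * (N^m)⁻¹ := by
    unfold prob
    have h5 : ∀ V : Fin m → Flat n k,
        (if V ∈ {V | 0 < Z n k m V} then Punif n k m V else 0)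
        = (N^m)⁻¹ - (if z V = 0 then (1:ℝ) else 0) * (N^m)⁻¹ := by
      intro V
      rw [hP, hz]
      by_cases h : Z n k m V = 0
      · simp [h]
      · simp [h, Nat.pos_of_ne_zero h]
    refine Eq.trans (Finset.sum_congr rfl fun V _ => Eq.trans (by congr) (h5 V)) ?_
    rw [Finset.sum_sub_distrib, ← Finset.sum_mul, Finset.sum_boole]
    have : ∑ V : Fin m → Flat n k, (N^m)⁻¹ = 1 := by
      simp only [Finset.sum_const, Finset.card_univ, nsmul_eq_mul]
      simp only [Fintype.card_fun, Fintype.card_fin, Nat.cast_pow]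
      exact mul_inv_cancel₀ (by positivity)
    rw [this]
  have hNm : 0 < N^m := by positivity
  have hμ : 0 < (2:ℝ)^n * (1 - p)^m := by
    have : 0 < 1 - p := by linarith
    positivity
  rw [hprob]
  constructor
  · have : C * (N^m)⁻¹ ≤ ((2:ℝ)^n * (1 - p)^m)⁻¹ := by
      rw [← div_eq_mul_inv, ← one_div, div_le_div_iff₀ hNm hμ, one_mul]
      exact key
    linarith
  · have : 0 ≤ C * (N^m)⁻¹ := by positivity
    linarith

lemma mean_tendsto (k : ℕ) (hk : 1 ≤ k) (Δ : ℝ) (hΔ : 0 < Δ) (hΔk : Δ < DeltaK k) :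
    Tendsto (fun n : ℕ => (2:ℝ)^n * (1 - ((2:ℝ)^k)⁻¹)^⌈Δ * (n:ℝ)⌉₊) atTop atTop := by
  set p : ℝ := ((2:ℝ)^k)⁻¹ with hp
  have hp1 : p < 1 := inv_lt_one_of_one_lt₀ (one_lt_pow₀ (by norm_num) (by omega))
  have hp0 : 0 < p := by positivity
  set r := 1 - p with hr
  have hr0 : 0 < r := by linarith
  have hr1 : r < 1 := by linarith
  have hlog : Real.log r < 0 := Real.log_neg hr0 hr1
  have hδ : 0 < Real.log 2 + Δ * Real.log r := by
    unfold DeltaK at hΔk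
    rw [lt_div_iff_of_neg hlog] at hΔk
    rw [one_div, Real.log_inv] at hΔk
    linarith
  set δ := Real.log 2 + Δ * Real.log r
  have ht : Tendsto (fun n : ℕ => r * Real.exp (δ * (n:ℝ))) atTop atTop :=
    (Real.tendsto_exp_atTop.comp (tendsto_natCast_atTop_atTop.const_mul_atTop hδ)).const_mul_atTop hr0
  refine tendsto_atTop_mono (fun n => ?_) ht
  have hc : (⌈Δ * (n:ℝ)⌉₊ : ℝ) ≤ Δ * n + 1 := (Nat.ceil_lt_add_one (by positivity)).le
  have e1 : (2:ℝ)^n = Real.exp (Real.log 2 * n) := by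
    rw [← Real.rpow_natCast, Real.rpow_def_of_pos (by norm_num)]
  have e2 : r^⌈Δ * (n:ℝ)⌉₊ = Real.exp (Real.log r * ⌈Δ * (n:ℝ)⌉₊) := by
    rw [← Real.rpow_natCast, Real.rpow_def_of_pos hr0]
  rw [e1, e2, ← Real.exp_add]
  calc r * Real.exp (δ * n) = Real.exp (Real.log r + δ * n) := by
        rw [Real.exp_add, Real.exp_log hr0]
    _ ≤ _ := by
        apply Real.exp_le_exp.mpr
        simp only [δ]
        nlinarith

theorem stmt5 (k : ℕ) (hk : 1 ≤ k) (Δ : ℝ) (hΔ : 0 < Δ) (hΔk : Δ < DeltaK k) :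
    Tendsto (fun n : ℕ =>
        prob (Punif n k ⌈Δ * (n:ℝ)⌉₊) {V | 0 < Z n k ⌈Δ * (n:ℝ)⌉₊ V})
      atTop (nhds 1) := by
  have h := (mean_tendsto k hk Δ hΔ hΔk).inv_tendsto_atTop.const_sub 1
  rw [sub_zero] at h
  refine tendsto_of_tendsto_of_tendsto_of_le_of_le' h tendsto_const_nhds ?_ ?_
  · filter_upwards [eventually_ge_atTop k] with n hn
    exact (prob_bound hk hn).1
  · filter_upwards [eventually_ge_atTop k] with n hn
    exact (prob_bound hk hn).2
end

section
/- Fix k ≥ 1 and Δ > Δ_k, and for each n ≥ k let m = ⌈Δ n⌉. Let ψ_FLAT be the test that outputs 1 on an m-tuple V of k-flats iff Z(V) > 0. Then max( P_unif(ψ_FLAT = 1), P_planted(ψ_FLAT = 0) ) → 0 as n → ∞; in fact P_planted(ψ_FLAT = 0) = 0 for every n. -/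
open scoped BigOperators Classical
open Filter Topology

open scoped Pointwise in
lemma flat_translate {n k : ℕ} {W : Set (F2n n)} (v : F2n n) (h : IsFlat n k W) :
    IsFlat n k (v +ᵥ W) := by
  obtain ⟨A, rfl, hne, hd⟩ := h
  refine ⟨v +ᵥ A, AffineSubspace.coe_pointwise_vadd v A, hne.vadd_set, ?_⟩
  rw [AffineSubspace.pointwise_vadd_direction, hd]

lemma flat_card {n k : ℕ} {W : Set (F2n n)} (h : IsFlat n k W) :
    Nat.card W = 2 ^ (n - k) := by
  obtain ⟨A, rfl, ⟨p, hp⟩, hd⟩ := h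
  haveI : Nonempty A := ⟨⟨p, hp⟩⟩
  have e : A.direction ≃ A := Equiv.vaddConst (⟨p, hp⟩ : A)
  have h1 : Nat.card A.direction = 2 ^ (n - k) := by
    rw [Module.natCard_eq_pow_finrank (K := ZMod 2), hd]; simp
  rw [← h1]
  exact (Nat.card_congr e).symm

open scoped Pointwise in
lemma count_le {n k : ℕ} (x y : F2n n) :
    Fintype.card {W : Flat n k // x ∈ W.1} ≤ Fintype.card {W : Flat n k // y ∈ W.1} := by
  refine Fintype.card_le_of_injective
    (fun W => ⟨⟨(y - x) +ᵥ W.1.1, flat_translate _ W.1.2⟩, ?_⟩) ?_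
  · exact ⟨x, W.2, by simp⟩
  · intro W W' h
    have h2 : (y - x) +ᵥ W.1.1 = (y - x) +ᵥ W'.1.1 :=
      congrArg (fun U : {W : Flat n k // y ∈ W.1} => U.1.1) h
    have h3 := vadd_left_cancel _ h2
    exact Subtype.ext (Subtype.ext h3)

lemma count_mem {n k : ℕ} (x : F2n n) :
    2 ^ n * Fintype.card {W : Flat n k // x ∈ W.1} = Fintype.card (Flat n k) * 2 ^ (n - k) := by
  have h1 : ∑ y : F2n n, Fintype.card {W : Flat n k // y ∈ W.1}
      = Fintype.card (Flat n k) * 2 ^ (n - k) := by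
    simp_rw [Fintype.card_subtype, Finset.card_filter]
    rw [Finset.sum_comm]
    have : ∀ W : Flat n k, (∑ y : F2n n, if y ∈ W.1 then 1 else 0) = 2 ^ (n - k) := by
      intro W
      rw [← flat_card W.2, ← Finset.card_filter, ← Fintype.card_subtype, Nat.card_eq_fintype_card]
    simp [this]
  rw [← h1, Finset.sum_congr rfl (fun y _ => le_antisymm (count_le (k := k) y x) (count_le x y))]
  simp [ZMod.card]

lemma q0_sum {n k : ℕ} (hkn : k ≤ n) (x : F2n n) :
    (∑ W : Flat n k, if x ∉ W.1 then q0 n k W else 0) ≤ 1 - ((2:ℝ)^k)⁻¹ := by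
  have hc := count_mem (k := k) x
  have hs : Fintype.card {W : Flat n k // x ∈ W.1} + Fintype.card {W : Flat n k // x ∉ W.1}
      = Fintype.card (Flat n k) := Fintype.card_subtype_compl (fun W : Flat n k => x ∈ W.1) ▸
        Nat.add_sub_cancel' (Fintype.card_subtype_le _)
  have h2 : (2:ℝ)^n = 2^k * 2^(n-k) := by rw [← pow_add, Nat.add_sub_cancel' hkn]
  have hc' : (2:ℝ)^n * Fintype.card {W : Flat n k // x ∈ W.1}
      = Fintype.card (Flat n k) * 2 ^ (n - k) := by exact_mod_cast hc
  have hs' : (Fintype.card {W : Flat n k // x ∈ W.1} : ℝ) + Fintype.card {W : Flat n k // x ∉ W.1}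
      = Fintype.card (Flat n k) := by exact_mod_cast hs
  have e : (∑ W : Flat n k, if x ∉ W.1 then q0 n k W else 0)
      = Fintype.card {W : Flat n k // x ∉ W.1} * (Fintype.card (Flat n k) : ℝ)⁻¹ := by
    rw [← Finset.sum_filter, Fintype.card_subtype]
    simp [q0]
  rw [e]
  have hk1 : (1:ℝ) ≤ 2^k := one_le_pow₀ (by norm_num)
  rcases (Nat.cast_nonneg (α := ℝ) (Fintype.card (Flat n k))).eq_or_lt with h0 | h0
  · rw [← h0]; simp; exact inv_le_one_of_one_le₀ hk1
  · have hp : (0:ℝ) < 2^(n-k) := by positivity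
    have h3 : (2:ℝ)^k * Fintype.card {W : Flat n k // x ∈ W.1} = Fintype.card (Flat n k) := by
      apply mul_right_cancel₀ hp.ne'
      rw [← hc', h2]; ring
    apply le_of_eq
    field_simp
    rw [← hs'] at h3 ⊢
    linear_combination -h3

lemma unif_bound {n k : ℕ} (hkn : k ≤ n) (m : ℕ) :
    prob (Punif n k m) {V | 0 < Z n k m V} ≤ 2^n * (1 - ((2:ℝ)^k)⁻¹)^m := by
  have hq : ∀ W, 0 ≤ q0 n k W := fun W => by unfold q0; positivity
  have h1 : prob (Punif n k m) {V | 0 < Z n k m V} ≤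
      ∑ V : Fin m → Flat n k, ∑ x : F2n n, ∏ j, (if x ∉ (V j).1 then q0 n k (V j) else 0) := by
    unfold prob
    refine Finset.sum_le_sum fun V _ => ?_
    have hnn : ∀ x : F2n n, 0 ≤ ∏ j, (if x ∉ (V j).1 then q0 n k (V j) else 0) :=
      fun x => Finset.prod_nonneg fun j _ => by split_ifs <;> first | exact hq _ | exact le_rfl
    split_ifs with hV
    · obtain ⟨⟨x, hx⟩⟩ := (Nat.card_pos_iff.1 hV).1
      refine le_trans (le_of_eq ?_)
        (Finset.single_le_sum (fun x _ => hnn x) (Finset.mem_univ x))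
      exact Finset.prod_congr rfl fun j _ => by rw [if_pos (hx j)]
    · exact Finset.sum_nonneg fun x _ => hnn x
  refine h1.trans ?_
  rw [Finset.sum_comm]
  have h2 : ∀ x : F2n n,
      ∑ V : Fin m → Flat n k, ∏ j, (if x ∉ (V j).1 then q0 n k (V j) else 0)
        ≤ (1 - ((2:ℝ)^k)⁻¹)^m := by
    intro x
    have := Fintype.sum_pow (fun W : Flat n k => if x ∉ W.1 then q0 n k W else 0) m
    rw [← this]
    refine pow_le_pow_left₀ (Finset.sum_nonneg fun W _ => ?_) (q0_sum hkn x) m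
    split_ifs <;> first | exact hq _ | exact le_rfl
  refine (Finset.sum_le_sum fun x _ => h2 x).trans ?_
  simp [ZMod.card]

lemma planted_zero (n k m : ℕ) :
    prob (Pplanted n k m) {V | ¬ 0 < Z n k m V} = 0 := by
  unfold prob
  refine Finset.sum_eq_zero fun V _ => ?_
  split_ifs with hV
  · unfold Pplanted
    rw [Finset.sum_eq_zero, mul_zero]
    intro x _
    have : ∃ j, x ∈ (V j).1 := by
      by_contra! hx
      exact hV (Nat.card_pos_iff.2 ⟨⟨⟨x, hx⟩⟩, inferInstance⟩)
    obtain ⟨j, hj⟩ := this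
    exact Finset.prod_eq_zero (Finset.mem_univ j) (by simp [qx, hj])
  · rfl


theorem stmt9 (k : ℕ) (hk : 1 ≤ k) (Δ : ℝ) (hΔk : DeltaK k < Δ) :
    Tendsto (fun n : ℕ =>
        max (prob (Punif n k ⌈Δ * (n:ℝ)⌉₊) {V | 0 < Z n k ⌈Δ * (n:ℝ)⌉₊ V})
            (prob (Pplanted n k ⌈Δ * (n:ℝ)⌉₊) {V | ¬ 0 < Z n k ⌈Δ * (n:ℝ)⌉₊ V}))
      atTop (nhds 0)
    ∧ ∀ n : ℕ, k ≤ n →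
        prob (Pplanted n k ⌈Δ * (n:ℝ)⌉₊) {V | ¬ 0 < Z n k ⌈Δ * (n:ℝ)⌉₊ V} = 0 := by
  refine ⟨?_, fun n _ => planted_zero n k _⟩
  set r : ℝ := 1 - ((2:ℝ)^k)⁻¹ with hr
  have hk2 : (2:ℝ) ≤ 2^k := by
    calc (2:ℝ) = 2^1 := by norm_num
      _ ≤ 2^k := pow_le_pow_right₀ (by norm_num) hk
  have hinv : ((2:ℝ)^k)⁻¹ ≤ 2⁻¹ := inv_anti₀ (by norm_num) hk2
  have hinv0 : 0 < ((2:ℝ)^k)⁻¹ := by positivity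
  have hr0 : 0 < r := by rw [hr]; norm_num at hinv ⊢; linarith
  have hr1 : r < 1 := by rw [hr]; linarith
  have hlog : Real.log r < 0 := Real.log_neg hr0 hr1
  have hb : 2 * r ^ Δ < 1 := by
    have h1 : Δ * Real.log r < Real.log (1/2) := by
      have := hΔk
      unfold DeltaK at this
      rwa [div_lt_iff_of_neg hlog] at this
    have h2 : r ^ Δ < 1/2 := by
      rw [Real.rpow_def_of_pos hr0, ← Real.exp_log (show (0:ℝ) < 1/2 by norm_num)]
      exact Real.exp_lt_exp.2 (by linarith)
    linarith
  have hb0 : 0 ≤ 2 * r ^ Δ := by positivity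
  refine tendsto_of_tendsto_of_tendsto_of_le_of_le' tendsto_const_nhds
    (tendsto_pow_atTop_nhds_zero_of_lt_one hb0 hb) ?_ ?_
  · exact Eventually.of_forall fun n => le_max_of_le_right (planted_zero n k _).ge
  · filter_upwards [eventually_ge_atTop k] with n hn
    rw [planted_zero]
    refine max_le ?_ (by positivity)
    refine (unif_bound hn _).trans ?_
    rw [mul_pow, ← Real.rpow_natCast (r ^ Δ), ← Real.rpow_mul hr0.le, ← hr,
      ← Real.rpow_natCast r]
    exact mul_le_mul_of_nonneg_left
      (Real.rpow_le_rpow_of_exponent_ge hr0 hr1.le (Nat.le_ceil _)) (by positivity)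
end

section
/- Let 1 ≤ k ≤ n, m ≥ 1, α > 0, and let V = (V_1,…,V_m) be m i.i.d. uniform k-flats of F_2^n (law P_unif). Then P_unif( σ(V) > ((1 − 2^{−k}) + α) m ) ≤ 2^n · exp(−2 α² m). -/
open scoped BigOperators Classical
open Filter Topology

lemma bern_mgf (q t : ℝ) (h0 : 0 ≤ q) (h1 : q ≤ 1) :
    (1 - q) + q * Real.exp t ≤ Real.exp (q * t + t ^ 2 / 8) := by
  let μ : MeasureTheory.Measure ℝ := ENNReal.ofReal q • MeasureTheory.Measure.dirac 1
    + ENNReal.ofReal (1 - q) • MeasureTheory.Measure.dirac 0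
  have h_integral : ∀ f : ℝ → ℝ, ∫ x, f x ∂μ = q * f 1 + (1 - q) * f 0 := by
    intro f
    have hi : ∀ a : ℝ, MeasureTheory.Integrable f (MeasureTheory.Measure.dirac a) := fun a =>
      MeasureTheory.integrable_dirac (by simp)
    rw [MeasureTheory.integral_add_measure ((hi 1).smul_measure (by simp))
      ((hi 0).smul_measure (by simp)), MeasureTheory.integral_smul_measure,
      MeasureTheory.integral_smul_measure]
    simp [ENNReal.toReal_ofReal h0, ENNReal.toReal_ofReal (sub_nonneg.2 h1)]
  have hp : MeasureTheory.IsProbabilityMeasure μ := ⟨by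
    simp only [μ, MeasureTheory.Measure.coe_add, MeasureTheory.Measure.coe_smul, Pi.add_apply,
      Pi.smul_apply, MeasureTheory.measure_univ, smul_eq_mul, mul_one]
    rw [← ENNReal.ofReal_add h0 (sub_nonneg.2 h1)]; simp⟩
  have hb : ∀ᵐ x ∂μ, (id x : ℝ) ∈ Set.Icc (0:ℝ) 1 := by
    rw [MeasureTheory.ae_add_measure_iff]
    constructor
    · apply MeasureTheory.Measure.ae_smul_measure
      exact (MeasureTheory.ae_dirac_iff (p := fun x : ℝ => x ∈ Set.Icc (0:ℝ) 1) measurableSet_Icc).2 (by simp)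
    · apply MeasureTheory.Measure.ae_smul_measure
      exact (MeasureTheory.ae_dirac_iff (p := fun x : ℝ => x ∈ Set.Icc (0:ℝ) 1) measurableSet_Icc).2 (by simp)
  have h := (ProbabilityTheory.hasSubgaussianMGF_of_mem_Icc (μ := μ) (X := id)
    aemeasurable_id hb).mgf_le t
  rw [ProbabilityTheory.mgf, h_integral, h_integral] at h
  simp only [id] at h
  have e : Real.exp (q * t + t ^ 2 / 8) = Real.exp (q * t) * Real.exp (t^2/8) := Real.exp_add _ _
  rw [e]
  have h2 := mul_le_mul_of_nonneg_left h (Real.exp_pos (q*t)).le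
  have e1 : Real.exp (q*t) * Real.exp (t * (1 - (q * 1 + (1 - q) * 0))) = Real.exp t := by
    rw [← Real.exp_add]; congr 1; ring
  have e0 : Real.exp (q*t) * Real.exp (t * (0 - (q * 1 + (1 - q) * 0))) = 1 := by
    rw [← Real.exp_add]; ring_nf; exact Real.exp_zero
  calc _ = _ := ?_
    _ ≤ _ := h2
    _ = _ := ?_
  · rw [mul_add, mul_left_comm, e1, mul_left_comm, e0]; ring
  · congr 2; norm_num; ring

lemma isFlat_translate {n k : ℕ} (v : F2n n) {W : Set (F2n n)} (h : IsFlat n k W) :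
    IsFlat n k ((fun y => v + y) '' W) := by
  obtain ⟨A, hA, hne, hd⟩ := h
  refine ⟨A.map (AffineEquiv.constVAdd (ZMod 2) (F2n n) v).toAffineMap, ?_, hne.image _, ?_⟩
  · rw [AffineSubspace.coe_map, hA]; rfl
  · rw [AffineSubspace.map_direction, ← hd]
    exact LinearEquiv.finrank_map_eq (AffineEquiv.constVAdd (ZMod 2) (F2n n) v).linear A.direction

lemma card_flat_mem_le {n k : ℕ} (x y : F2n n) :
    (Finset.univ.filter (fun W : Flat n k => x ∈ W.1)).card ≤
    (Finset.univ.filter (fun W : Flat n k => y ∈ W.1)).card := by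
  apply Finset.card_le_card_of_injOn
    (fun W : Flat n k => (⟨(fun z => (y - x) + z) '' W.1, isFlat_translate _ W.2⟩ : Flat n k))
  · intro W hW
    have hW' : x ∈ W.1 := by simpa using hW
    refine Finset.mem_coe.2 (Finset.mem_filter.2 ⟨@Finset.mem_univ (Flat n k) _ _, ?_⟩)
    exact ⟨x, hW', by simp⟩
  · intro W _ W' _ h
    have h' := congrArg Subtype.val h
    exact Subtype.ext ((Set.image_injective.2 (add_right_injective (y - x))) h')

lemma card_flat {n k : ℕ} (W : Flat n k) :
    (Finset.univ.filter (fun x : F2n n => x ∈ W.1)).card = 2 ^ (n - k) := by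
  obtain ⟨A, hA, ⟨p, hp⟩, hd⟩ := W.2
  have hpA : p ∈ A := by rw [← hA] at hp; exact hp
  have h1 : Nat.card A.direction = 2 ^ (n - k) := by
    rw [Module.natCard_eq_pow_finrank (K := ZMod 2), hd]; simp
  rw [← h1]
  rw [Nat.card_eq_fintype_card, ← Fintype.card_subtype]
  refine (Fintype.card_congr ?_).symm
  refine ⟨fun v => ⟨v.1 +ᵥ p, ?_⟩, fun y => ⟨y.1 -ᵥ p, ?_⟩, ?_, ?_⟩
  · rw [← hA]; exact AffineSubspace.vadd_mem_of_mem_direction v.2 hpA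
  · have hy : y.1 ∈ A := by rw [← SetLike.mem_coe, hA]; exact y.2
    exact AffineSubspace.vsub_mem_direction hy hpA
  · intro v; simp
  · intro y; simp

lemma card_flat_mem {n k : ℕ} (hkn : k ≤ n) (x : F2n n) :
    (Finset.univ.filter (fun W : Flat n k => x ∈ W.1)).card * 2 ^ k = Fintype.card (Flat n k) := by
  have h := Finset.sum_card_bipartiteAbove_eq_sum_card_bipartiteBelow
    (s := (Finset.univ : Finset (F2n n))) (t := (Finset.univ : Finset (Flat n k)))
    (fun x W => x ∈ W.1)
  simp only [Finset.bipartiteAbove, Finset.bipartiteBelow, card_flat] at h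
  rw [Finset.sum_congr rfl (fun y _ => le_antisymm (card_flat_mem_le y x)
    (card_flat_mem_le x y))] at h
  simp only [Finset.sum_const, Finset.card_univ, smul_eq_mul, Fintype.card_pi, ZMod.card,
    Finset.prod_const, Fintype.card_fin] at h
  have h2 : (2:ℕ)^n = 2^k * 2^(n-k) := by rw [← pow_add]; congr 1; omega
  rw [h2] at h
  have : 0 < 2^(n-k) := by positivity
  apply Nat.eq_of_mul_eq_mul_right this
  rw [← h]; ring

lemma single_mgf {n k : ℕ} (hkn : k ≤ n) [Nonempty (Flat n k)] (x : F2n n) (t : ℝ) :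
    ∑ W : Flat n k, q0 n k W * Real.exp (t * (if x ∉ W.1 then 1 else 0)) ≤
      Real.exp ((1 - ((2:ℝ)^k)⁻¹) * t + t ^ 2 / 8) := by
  have hN : (0:ℝ) < Fintype.card (Flat n k) := by exact_mod_cast Fintype.card_pos
  have hc : ((Finset.univ.filter (fun W : Flat n k => x ∈ W.1)).card : ℝ) * 2 ^ k
      = Fintype.card (Flat n k) := by exact_mod_cast card_flat_mem hkn x
  have h2 : (0:ℝ) < 2^k := by positivity
  have h21 : ((2:ℝ)^k)⁻¹ ≤ 1 := inv_le_one_of_one_le₀ (one_le_pow₀ (by norm_num))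
  refine le_trans (le_of_eq ?_) (bern_mgf (1 - ((2:ℝ)^k)⁻¹) t (by linarith)
    (by have := inv_pos.2 h2; linarith))
  have hs : ∀ W : Flat n k, q0 n k W * Real.exp (t * (if x ∉ W.1 then 1 else 0)) =
      (Fintype.card (Flat n k) : ℝ)⁻¹ * (Real.exp t + (if x ∈ W.1 then (1 - Real.exp t) else 0)) := by
    intro W
    by_cases hx : x ∈ W.1 <;> simp [hx, q0]
  rw [Finset.sum_congr rfl (fun W _ => hs W), ← Finset.mul_sum, Finset.sum_add_distrib,
    ← Finset.sum_filter, Finset.sum_const, Finset.sum_const, Finset.card_univ, nsmul_eq_mul,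
    nsmul_eq_mul]
  rw [← hc] at hN ⊢
  have hc0 := pos_of_mul_pos_left hN h2.le
  field_simp
  ring

lemma satCount_eq {n k m : ℕ} (V : Fin m → Flat n k) (x : F2n n) :
    (satCount n k m V x : ℝ) = ∑ j, (if x ∉ (V j).1 then (1:ℝ) else 0) := by
  rw [satCount, Nat.card_eq_fintype_card, Fintype.card_subtype, Finset.sum_boole]

theorem stmt15 (n k m : ℕ) (hk : 1 ≤ k) (hkn : k ≤ n) (hm : 1 ≤ m) (α : ℝ) (hα : 0 < α) :
    prob (Punif n k m)
        {V | ((1 - ((2:ℝ)^k)⁻¹) + α) * m < (maxSat n k m V : ℝ)}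
      ≤ (2:ℝ)^n * Real.exp (-2 * α^2 * m) := by
  by_cases hne : Nonempty (Flat n k)
  swap
  · have : IsEmpty (Fin m → Flat n k) := ⟨fun V => hne ⟨V ⟨0, hm⟩⟩⟩
    rw [prob, Finset.univ_eq_empty, Finset.sum_empty]
    positivity
  set q : ℝ := 1 - ((2:ℝ)^k)⁻¹ with hq
  have hP : ∀ V, 0 ≤ Punif n k m V := fun V =>
    Finset.prod_nonneg (fun j _ => by unfold q0; positivity)
  have hpt : ∀ V : Fin m → Flat n k,
      (if V ∈ {V | (q + α) * m < (maxSat n k m V : ℝ)} then Punif n k m V else 0) ≤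
      ∑ x : F2n n, Punif n k m V *
        Real.exp (4 * α * (satCount n k m V x : ℝ) - 4 * α * ((q + α) * m)) := by
    intro V
    split_ifs with h
    · obtain ⟨x, -, hx⟩ := Finset.exists_mem_eq_sup (Finset.univ : Finset (F2n n))
        Finset.univ_nonempty (fun x : F2n n => satCount n k m V x)
      have hx' : (q + α) * m < (satCount n k m V x : ℝ) := by
        rw [← hx]; exact h
      refine le_trans ?_ (Finset.single_le_sum (fun y _ => mul_nonneg (hP V) (Real.exp_pos _).le)
        (Finset.mem_univ x))
      refine le_mul_of_one_le_right (hP V) (Real.one_le_exp ?_)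
      nlinarith
    · exact Finset.sum_nonneg (fun y _ => mul_nonneg (hP V) (Real.exp_pos _).le)
  refine (Finset.sum_le_sum (fun V _ => hpt V)).trans ?_
  rw [Finset.sum_comm]
  have hx : ∀ x : F2n n, ∑ V : Fin m → Flat n k, Punif n k m V *
        Real.exp (4 * α * (satCount n k m V x : ℝ) - 4 * α * ((q + α) * m)) ≤
        Real.exp (-2 * α^2 * m) := by
    intro x
    have e : ∀ V : Fin m → Flat n k, Punif n k m V *
        Real.exp (4 * α * (satCount n k m V x : ℝ) - 4 * α * ((q + α) * m)) =
        (∏ j, q0 n k (V j) * Real.exp (4 * α * (if x ∉ (V j).1 then 1 else 0))) *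
          Real.exp (- (4 * α * ((q + α) * m))) := by
      intro V
      rw [sub_eq_add_neg, Real.exp_add, satCount_eq, Finset.mul_sum, Real.exp_sum,
        Finset.prod_mul_distrib, Punif]
      ring
    rw [Finset.sum_congr rfl (fun V _ => e V), ← Finset.sum_mul,
      ← Fintype.sum_pow (fun W : Flat n k => q0 n k W * Real.exp (4 * α * (if x ∉ W.1 then 1 else 0))) m]
    have h0 : 0 ≤ ∑ W : Flat n k, q0 n k W * Real.exp (4 * α * (if x ∉ W.1 then 1 else 0)) :=
      Finset.sum_nonneg (fun W _ => by unfold q0; positivity)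
    refine (mul_le_mul_of_nonneg_right (pow_le_pow_left₀ h0 (single_mgf hkn x (4 * α)) m)
      (Real.exp_pos _).le).trans (le_of_eq ?_)
    rw [← Real.exp_nat_mul, ← Real.exp_add]
    congr 1
    rw [← hq]; ring
  refine (Finset.sum_le_sum (fun x _ => hx x)).trans (le_of_eq ?_)
  simp
end
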